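/- Let X = X_{a,b} be the Bourgain–Delbaen space. Then C([0,ω^ω]), the Banach space of continuous real-valued functions on the compact ordinal interval [0,ω^ω] with the order topology, is not isomorphic to a quotient of X; that is, there is no bounded linear surjection from X onto C([0,ω^ω]). -/

import Mathlib

open MeasureTheory Set Ordinal Filter
open scoped Classical

/-- `ℓ∞ = ℓ∞(ℕ)`. -/
noncomputable abbrev linf : Type := lp (fun _ : ℕ => ℝ) ⊤

/-- The `k`-th coordinate functional `e_k^*` on `ℓ∞`. -/
noncomputable def coordFn (k : ℕ) : linf →L[ℝ] ℝ :=
  LinearMap.mkContinuous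
    { toFun := fun x => x k
      map_add' := fun _ _ => rfl
      map_smul' := fun _ _ => rfl }
    1 (fun x => by
      rw [one_mul]
      exact lp.norm_apply_le_norm (E := fun _ : ℕ => ℝ) ENNReal.top_ne_zero x k)

/-- The `k`-th coordinate vector `e_k` of `ℓ∞`. -/
noncomputable def ek (k : ℕ) : linf := lp.single ⊤ k (1 : ℝ)

/-- `E_n = span{e_k : 1 ≤ k ≤ d n}`. -/
noncomputable def Esub (d : ℕ → ℕ) (n : ℕ) : Submodule ℝ linf :=
  Submodule.span ℝ {x : linf | ∃ k : ℕ, 1 ≤ k ∧ k ≤ d n ∧ x = ek k}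

/-- All the data of the Bourgain–Delbaen construction: the constants `a`, `b`, `λ`, the
dimensions `d n`, the enumeration `φ` of tuples `(σ',i,m,σ'',j)`, the coordinate projections
`π_m`, the embeddings `i_{m,n}` and the limit projections `P_m`, together with their defining
properties. -/
structure BDSetup where
  a : ℝ
  b : ℝ
  lam : ℝ
  hb : 0 < b
  hba : b < a
  ha : a < 1
  hlam : 1 < lam
  hineq : a + 2 * b * lam < lam
  /-- the dimensions -/
  d : ℕ → ℕ
  hd1 : d 1 = 1
  hd2 : d 2 = 2
  /-- the enumeration of the tuples `(σ', i, m, σ'', j)` -/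
  φ : ℕ → ℤ × ℕ × ℕ × ℤ × ℕ
  hφ : ∀ n : ℕ, 2 ≤ n → Set.BijOn φ {k : ℕ | d n < k ∧ k ≤ d (n + 1)}
      {q : ℤ × ℕ × ℕ × ℤ × ℕ | (q.1 = 1 ∨ q.1 = -1) ∧ (q.2.2.2.1 = 1 ∨ q.2.2.2.1 = -1) ∧
        1 ≤ q.2.2.1 ∧ q.2.2.1 < n ∧ 1 ≤ q.2.1 ∧ q.2.1 ≤ d q.2.2.1 ∧
        1 ≤ q.2.2.2.2 ∧ q.2.2.2.2 ≤ d n}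
  /-- the coordinate projections `π_m` -/
  pi : ℕ → (linf →L[ℝ] linf)
  hpi : ∀ (m : ℕ) (x : linf) (k : ℕ), pi m x k = if 1 ≤ k ∧ k ≤ d m then x k else 0
  /-- the embeddings `i_{m,n}` -/
  iMap : ℕ → ℕ → (linf →L[ℝ] linf)
  hi12 : ∀ x : linf, x ∈ Esub d 1 → iMap 1 2 x = x
  histep : ∀ n : ℕ, 2 ≤ n → ∀ x : linf, x ∈ Esub d n →
    iMap n (n + 1) x = x + ∑ k ∈ Finset.Ioc (d n) (d (n + 1)),
      (a * ((φ k).1 : ℝ) * x (φ k).2.1 +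
        b * (((φ k).2.2.2.1 : ℤ) : ℝ) *
          ((x - iMap (φ k).2.2.1 n (pi (φ k).2.2.1 x)) (φ k).2.2.2.2)) • ek k
  hicomp : ∀ m n : ℕ, 1 ≤ m → m < n → ∀ x : linf, x ∈ Esub d m →
    iMap m (n + 1) x = iMap n (n + 1) (iMap m n x)
  hinorm : ∀ m n : ℕ, 1 ≤ m → m < n → ∀ x : linf, x ∈ Esub d m → ‖iMap m n x‖ ≤ lam * ‖x‖
  /-- the coordinatewise limit projections `P_m` -/
  P : ℕ → (linf →L[ℝ] linf)
  hP0 : P 0 = 0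
  hPlim : ∀ m : ℕ, 1 ≤ m → ∀ (x : linf) (k : ℕ),
    Filter.Tendsto (fun n => (iMap m n (pi m x)) k) Filter.atTop (nhds (P m x k))
  hPproj : ∀ m : ℕ, (P m).comp (P m) = P m
  hPnorm : ∀ m : ℕ, ‖P m‖ ≤ lam

/-- The Bourgain–Delbaen space `X = X_{a,b}`, the closed linear span of `⋃ m, P_m(E_m)`. -/
noncomputable def Xsub (S : BDSetup) : Submodule ℝ linf :=
  (Submodule.span ℝ (⋃ m ∈ {m : ℕ | 1 ≤ m}, (S.P m) '' (Esub S.d m))).topologicalClosure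

/-- The restriction (quotient) map `Q : ℓ∞^* → X^*`. -/
noncomputable def QMap (S : BDSetup) (f : linf →L[ℝ] ℝ) : (Xsub S) →L[ℝ] ℝ :=
  f.comp (Xsub S).subtypeL

/-- The images `Q e_k^*` of the coordinate functionals in `X^*`. -/
noncomputable def Qe (S : BDSetup) (k : ℕ) : (Xsub S) →L[ℝ] ℝ := QMap S (coordFn k)

/-- Ordinal intervals `[0,θ]` are compact in the order topology. -/
noncomputable instance (θ : Ordinal) : CompactSpace (Set.Iic θ) :=
  isCompact_iff_compactSpace.mp (by rw [← Set.Icc_bot]; exact isCompact_Icc)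

/-!
A surjection `T` from a Banach space with a finite-dimensional decomposition onto `C(K)` yields long
block sequences. Given infinitely many disjoint clopen sets, lift their indicators. A partial sum
projection is compact, so it nearly kills the difference of two of the lifts, and that difference is
close to a block whose image under `T` is at least `1 / 2` on one of the sets. Iterating inside that
set, which for `K = [0, ω ^ ω]` is possible any number `N` of times, produces uniformly bounded
blocks `z 0, …, z (N - 1)` with `‖∑ j, z j‖ ≥ c * N`.

In the Bourgain–Delbaen space such sums grow sublinearly. A coordinate of order `n` is
`x k = ± a * x i ± b * (x - P m x) j` on vectors fixed by `P n`. Hence, up to two blocks, a sum of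
`w` blocks at `k` is `a` times a sum of `u` blocks at `i` and `b` times a sum of `v` blocks at `j`,
where `u + v ≤ w` and `i, j < k`. Since `a, b < 1` there is `q` with `a ^ q + b ^ q < 1`, and by
Hölder's inequality the recursion is solved by a multiple of `w ^ θ` with `1 / θ` the exponent
conjugate to `q`.
-/

/-! ### Trees of clopen sets -/

theorem isClopen_Ioc {α : Type*} [LinearOrder α] [TopologicalSpace α] [OrderTopology α]
    [SuccOrder α] [NoMaxOrder α] (a b : α) : IsClopen (Ioc a b) := by
  constructor
  · rw [← Icc_succ_left_eq_Ioc]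
    exact isClosed_Icc
  · rw [← Ioo_succ_right_eq_Ioc]
    exact isOpen_Ioo

/-- `HasClopenTree r A` means that `A` is the root of a tree of height `r` whose other nodes are
clopen sets, each node above the leaves having infinitely many pairwise disjoint children inside
it. It plays the role of a lower bound on the Cantor–Bendixson rank of `A`. -/
inductive HasClopenTree {K : Type*} [TopologicalSpace K] : ℕ → Set K → Prop
  | leaf {A : Set K} (hA : A.Nonempty) : HasClopenTree 0 A
  | node {r : ℕ} {A : Set K} (B : ℕ → Set K) (isClopen : ∀ n, IsClopen (B n))
      (disjoint : Pairwise (Function.onFun Disjoint B)) (subset : ∀ n, B n ⊆ A)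
      (tree : ∀ n, HasClopenTree r (B n)) : HasClopenTree (r + 1) A

theorem HasClopenTree.preimage {K K' : Type*} [TopologicalSpace K] [TopologicalSpace K']
    {f : K → K'} (hf : Continuous f) {r : ℕ} {A : Set K'} (hA : HasClopenTree r A)
    (hAf : A ⊆ range f) : HasClopenTree r (f ⁻¹' A) := by
  induction hA with
  | leaf hA => exact .leaf (hA.preimage' hAf)
  | node B isClopen disjoint subset _ ih =>
    exact .node (fun n ↦ f ⁻¹' B n) (fun n ↦ (isClopen n).preimage hf)
      (fun _ _ h ↦ (disjoint h).preimage f) (fun n ↦ preimage_mono (subset n))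
      (fun n ↦ ih n ((subset n).trans hAf))

theorem hasClopenTree_Ioc_add_omega0_pow (r : ℕ) (β : Ordinal) :
    HasClopenTree r (Ioc β (β + ω ^ r)) := by
  induction r generalizing β with
  | zero => exact .leaf ⟨β + 1, by simp⟩
  | succ r ih =>
    let c : ℕ → Ordinal := fun k ↦ β + ω ^ r * k
    have c_succ (k : ℕ) : c (k + 1) = c k + ω ^ r := by
      simp only [c, Nat.cast_succ, mul_add, mul_one, add_assoc]
    have c_mono : Monotone c := monotone_nat_of_le_succ fun k ↦ by
      rw [c_succ]
      exact le_self_add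
    have c_le (k : ℕ) : c k ≤ β + ω ^ (r + 1) := by
      simp only [c, pow_succ]
      gcongr
      exact (natCast_lt_omega0 k).le
    refine .node (fun k ↦ Ioc (c k) (c (k + 1))) (fun k ↦ isClopen_Ioc _ _)
      c_mono.pairwise_disjoint_on_Ioc_succ
      (fun k ↦ Ioc_subset_Ioc le_self_add (c_le _)) fun k ↦ ?_
    rw [c_succ]
    exact ih (c k)

theorem exists_hasClopenTree_Iic_omega0_opow_omega0 (r : ℕ) :
    ∃ A : Set (Iic ((ω : Ordinal) ^ (ω : Ordinal))), HasClopenTree r A := by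
  refine ⟨_, (hasClopenTree_Ioc_add_omega0_pow r 0).preimage continuous_subtype_val ?_⟩
  have opow_le : (ω : Ordinal) ^ r ≤ ω ^ (ω : Ordinal) := by
    rw [← opow_natCast]
    exact opow_le_opow_right omega0_pos (natCast_lt_omega0 r).le
  rw [Subtype.range_val, zero_add]
  exact fun x hx ↦ hx.2.trans opow_le

/-! ### A sublinear growth rate -/

theorem exists_rpow_add_rpow_le {a b : ℝ} (ha₀ : 0 ≤ a) (ha : a < 1) (hb₀ : 0 ≤ b) (hb : b < 1) :
    ∃ θ ∈ Ioo (0 : ℝ) 1, ∃ ρ ∈ Ico (0 : ℝ) 1, ∀ u v : ℝ, 0 ≤ u → 0 ≤ v →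
      a * u ^ θ + b * v ^ θ ≤ ρ * (u + v) ^ θ := by
  have tendsto_zero := (tendsto_pow_atTop_nhds_zero_of_lt_one ha₀ ha).add
    (tendsto_pow_atTop_nhds_zero_of_lt_one hb₀ hb)
  rw [add_zero] at tendsto_zero
  obtain ⟨q, hq, two_le_q⟩ :=
    ((tendsto_zero.eventually_lt_const one_pos).and (eventually_ge_atTop 2)).exists
  have one_lt_q : (1 : ℝ) < q := by exact_mod_cast two_le_q
  set p := Real.conjExponent q
  have hpq : p.HolderConjugate q := (Real.HolderConjugate.conjExponent one_lt_q).symm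
  refine ⟨p⁻¹, ⟨hpq.inv_pos, inv_lt_one_of_one_lt₀ hpq.lt⟩, (a ^ q + b ^ q) ^ (1 / (q : ℝ)),
    ⟨by positivity, Real.rpow_lt_one (by positivity) hq (by positivity)⟩, fun u v hu hv ↦ ?_⟩
  have holder := Real.inner_le_Lp_mul_Lq_of_nonneg (Finset.univ : Finset (Fin 2))
    (f := ![a, b]) (g := ![u ^ p⁻¹, v ^ p⁻¹]) hpq.symm
    (by simp [Fin.forall_fin_two, ha₀, hb₀])
    (by simp [Fin.forall_fin_two, Real.rpow_nonneg, hu, hv])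
  simpa only [Fin.sum_univ_two, Matrix.cons_val_zero, Matrix.cons_val_one, Real.rpow_natCast,
    Real.rpow_inv_rpow hu hpq.ne_zero, Real.rpow_inv_rpow hv hpq.ne_zero, one_div] using holder

theorem exists_isLittleO_add_two_le {a b : ℝ} (ha₀ : 0 ≤ a) (ha : a < 1) (hb₀ : 0 ≤ b)
    (hb : b < 1) :
    ∃ g : ℕ → ℝ, (∀ n, 0 ≤ g n) ∧
      (∀ u v w, u + v ≤ w → 1 ≤ w → a * g u + b * g v + 2 ≤ g w) ∧
      g =o[atTop] fun n ↦ (n : ℝ) := by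
  obtain ⟨θ, ⟨hθ₀, hθ₁⟩, ρ, ⟨hρ₀, hρ₁⟩, hρ⟩ := exists_rpow_add_rpow_le ha₀ ha hb₀ hb
  have : 0 < 1 - ρ := sub_pos.2 hρ₁
  refine ⟨fun n ↦ 2 / (1 - ρ) * (n : ℝ) ^ θ, fun n ↦ by positivity, fun u v w huv hw ↦ ?_, ?_⟩
  · have contraction : a * (u : ℝ) ^ θ + b * (v : ℝ) ^ θ ≤ ρ * (w : ℝ) ^ θ := by
      refine (hρ u v u.cast_nonneg v.cast_nonneg).trans ?_
      gcongr
      exact_mod_cast huv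
    have one_le : 1 ≤ (w : ℝ) ^ θ := Real.one_le_rpow (by exact_mod_cast hw) hθ₀.le
    calc a * (2 / (1 - ρ) * (u : ℝ) ^ θ) + b * (2 / (1 - ρ) * (v : ℝ) ^ θ) + 2
        = 2 / (1 - ρ) * (a * (u : ℝ) ^ θ + b * (v : ℝ) ^ θ) + 2 * 1 := by ring
      _ ≤ 2 / (1 - ρ) * (ρ * (w : ℝ) ^ θ) + 2 * (w : ℝ) ^ θ := by gcongr
      _ = 2 / (1 - ρ) * (w : ℝ) ^ θ := by field_simp; ring
  · have rpow_isLittleO : (fun n : ℕ ↦ (n : ℝ) ^ θ) =o[atTop] fun n : ℕ ↦ (n : ℝ) := by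
      have ratio_tendsto := (tendsto_rpow_neg_atTop (sub_pos.2 hθ₁)).comp
        (tendsto_natCast_atTop_atTop (R := ℝ))
      refine Asymptotics.isLittleO_of_tendsto' ?_ (ratio_tendsto.congr' ?_)
      all_goals filter_upwards [eventually_gt_atTop 0] with n hn
      · exact fun h ↦ absurd (Nat.cast_eq_zero.1 h) hn.ne'
      · rw [Function.comp_apply, neg_sub, Real.rpow_sub_one (Nat.cast_ne_zero.2 hn.ne')]
    exact rpow_isLittleO.const_mul_left _

/-! ### Finite-dimensional decompositions -/

/-- `P 0, P 1, P 2, …` are commuting projections with increasing ranges, the partial sum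
projections of an abstract decomposition. -/
def IsProjectionChain {X : Type*} [NormedAddCommGroup X] [NormedSpace ℝ X]
    (P : ℕ → X →L[ℝ] X) : Prop :=
  ∀ l m x, P l (P m x) = P (min l m) x

/-- The `P m` are the partial sum projections of a finite-dimensional decomposition of `X`. Finite
rank is expressed by compactness, which is the same thing for a projection. -/
structure IsFDD {X : Type*} [NormedAddCommGroup X] [NormedSpace ℝ X]
    (P : ℕ → X →L[ℝ] X) : Prop where
  isProjectionChain : IsProjectionChain P
  isCompactOperator : ∀ m, IsCompactOperator (P m)
  tendsto : ∀ x, Tendsto (P · x) atTop (nhds x)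

/-- The sequence `z` is a block sequence: `z j` lies in the span of the summands with index in
`(L j, L (j + 1)]`. Blocks are allowed to vanish, so a finite block sequence is padded with
zeros. -/
structure IsBlockSequence {X : Type*} [NormedAddCommGroup X] [NormedSpace ℝ X]
    (P : ℕ → X →L[ℝ] X) (L : ℕ → ℕ) (z : ℕ → X) : Prop where
  monotone : Monotone L
  apply_succ : ∀ j, P (L (j + 1)) (z j) = z j
  apply_self : ∀ j, P (L j) (z j) = 0

section Decomposition

variable {X : Type*} [NormedAddCommGroup X] [NormedSpace ℝ X] {P : ℕ → X →L[ℝ] X}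
  {L : ℕ → ℕ} {z : ℕ → X}

theorem IsProjectionChain.apply_eq_self_of_le (hP : IsProjectionChain P) {l m : ℕ} (h : l ≤ m)
    {x : X} (hx : P l x = x) : P m x = x := by
  rw [← hx, hP, min_eq_right h]

theorem IsProjectionChain.apply_eq_zero_of_le (hP : IsProjectionChain P) {l m : ℕ} (h : l ≤ m)
    {x : X} (hx : P m x = 0) : P l x = 0 := by
  rw [← min_eq_left h, ← hP, hx, map_zero]

theorem IsBlockSequence.cons (hz : IsBlockSequence P L z) {l : ℕ} (hl : l ≤ L 0) {z₀ : X}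
    (hz₀ : P (L 0) z₀ = z₀) (hlz₀ : P l z₀ = 0) :
    IsBlockSequence P (fun j ↦ Nat.casesOn j l L) (fun j ↦ Nat.casesOn j z₀ z) where
  monotone := monotone_nat_of_le_succ fun
    | 0 => hl
    | j + 1 => hz.monotone j.le_succ
  apply_succ
    | 0 => hz₀
    | j + 1 => hz.apply_succ j
  apply_self
    | 0 => hlz₀
    | j + 1 => hz.apply_self j

/-- At most one block straddles the level `n`. -/
theorem IsBlockSequence.exists_split (hz : IsBlockSequence P L z) (hP : IsProjectionChain P)
    (n : ℕ) {p q : ℕ} (hpq : p ≤ q) :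
    ∃ t ∈ Icc p q, (∀ j ∈ Finset.Ico p t, P n (z j) = z j) ∧
      ∀ j ∈ Finset.Ico (t + 1) q, P (n + 1) (z j) = 0 := by
  induction hpq using Nat.decreasingInduction with
  | self => exact ⟨q, by simp, by simp, by simp⟩
  | of_succ p hp ih =>
    by_cases hn : L (p + 1) ≤ n
    · obtain ⟨t, ht, below, above⟩ := ih
      refine ⟨t, ⟨(Nat.le_succ p).trans ht.1, ht.2⟩, fun j hj ↦ ?_, above⟩
      obtain rfl | hpj := (Finset.mem_Ico.1 hj).1.eq_or_lt
      · exact hP.apply_eq_self_of_le hn (hz.apply_succ _)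
      · exact below j (Finset.mem_Ico.2 ⟨hpj, (Finset.mem_Ico.1 hj).2⟩)
    · refine ⟨p, ⟨le_rfl, hp.le⟩, by simp, fun j hj ↦ ?_⟩
      exact hP.apply_eq_zero_of_le
        ((not_le.1 hn).trans_le (hz.monotone (Finset.mem_Ico.1 hj).1)) (hz.apply_self j)

theorem norm_sum_Ico_sub_add_le {E : Type*} [SeminormedAddCommGroup E] {f : ℕ → E} {D : ℝ}
    (hD : ∀ j, ‖f j‖ ≤ D) {p q t : ℕ} (ht : t ∈ Icc p q) :
    ‖∑ j ∈ Finset.Ico p q, f j -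
      (∑ j ∈ Finset.Ico p t, f j + ∑ j ∈ Finset.Ico (t + 1) q, f j)‖ ≤ D := by
  rw [← Finset.sum_Ico_consecutive f ht.1 ht.2, _root_.add_sub_add_left_eq_sub]
  obtain rfl | htq := ht.2.eq_or_lt
  · simpa using (norm_nonneg _).trans (hD t)
  · rw [Finset.sum_eq_sum_Ico_succ_bot htq, _root_.add_sub_cancel_right]
    exact hD t

theorem exists_ne_norm_map_sub_lt {𝕜 X Y : Type*} [NontriviallyNormedField 𝕜]
    [NormedAddCommGroup X] [NormedSpace 𝕜 X] [NormedAddCommGroup Y] [NormedSpace 𝕜 Y]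
    {f : X →L[𝕜] Y} (hf : IsCompactOperator f) {x : ℕ → X} {C : ℝ} (hx : ∀ n, ‖x n‖ ≤ C)
    {ε : ℝ} (hε : 0 < ε) : ∃ m n, m ≠ n ∧ ‖f (x m - x n)‖ < ε := by
  obtain ⟨y, -, ψ, hψ, hlim⟩ :=
    (hf.isCompact_closure_image_closedBall (f := (f : X →ₗ[𝕜] Y)) C).tendsto_subseq
      fun n ↦ subset_closure ⟨x n, mem_closedBall_zero_iff.2 (hx n), rfl⟩
  obtain ⟨N, hN⟩ := Metric.cauchySeq_iff'.1 hlim.cauchySeq ε hε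
  refine ⟨ψ (N + 1), ψ N, (hψ N.lt_succ_self).ne', ?_⟩
  simpa [dist_eq_norm] using hN (N + 1) N.le_succ

theorem IsFDD.exists_ne_norm_sub_block_lt (hP : IsFDD P) {x : ℕ → X} {C : ℝ}
    (hx : ∀ n, ‖x n‖ ≤ C) (l : ℕ) {ε : ℝ} (hε : 0 < ε) :
    ∃ m n, m ≠ n ∧ ∃ M z, l ≤ M ∧ P M z = z ∧ P l z = 0 ∧ ‖x m - x n - z‖ < ε := by
  obtain ⟨m, n, hmn, hl⟩ :=
    exists_ne_norm_map_sub_lt (hP.isCompactOperator l) hx (half_pos hε)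
  set u := x m - x n
  obtain ⟨M, hM, hlM⟩ := ((Metric.tendsto_nhds.1 (hP.tendsto u) _ (half_pos hε)).and
    (eventually_ge_atTop l)).exists
  rw [dist_eq_norm'] at hM
  refine ⟨m, n, hmn, M, P M u - P l u, hlM, ?_, ?_, ?_⟩
  · rw [map_sub, hP.isProjectionChain, hP.isProjectionChain, min_self, min_eq_right hlM]
  · rw [map_sub, hP.isProjectionChain, hP.isProjectionChain, min_self, min_eq_left hlM,
      _root_.sub_self]
  · calc ‖u - (P M u - P l u)‖ = ‖(u - P M u) + P l u‖ := by abel_nf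
      _ ≤ ‖u - P M u‖ + ‖P l u‖ := norm_add_le _ _
      _ < ε := by linarith

section Lifting

variable {K : Type*} [TopologicalSpace K] [CompactSpace K]

theorem norm_charFn_le_one {U : Set K} (hU : IsClopen U) :
    ‖(LocallyConstant.charFn ℝ hU : C(K, ℝ))‖ ≤ 1 := by
  refine (ContinuousMap.norm_le _ zero_le_one).2 fun t ↦ ?_
  rw [LocallyConstant.coe_continuousMap, LocallyConstant.coe_charFn]
  exact (norm_indicator_le_norm_self _ _).trans (by simp)

variable {T : X →L[ℝ] C(K, ℝ)} {C : ℝ}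

/-- The block approximates the difference of the lifts of the indicators of two of the sets. -/
theorem IsFDD.exists_block_half_le_apply (hP : IsFDD P) (hC : 0 ≤ C)
    (hT : ∀ h, ∃ x, T x = h ∧ ‖x‖ ≤ C * ‖h‖) {B : ℕ → Set K} (hB : ∀ n, IsClopen (B n))
    (disjoint : Pairwise (Function.onFun Disjoint B)) (l : ℕ) :
    ∃ n M z, l ≤ M ∧ P M z = z ∧ P l z = 0 ∧ ‖z‖ ≤ 2 * C + 1 ∧ ∀ t ∈ B n, 1 / 2 ≤ T z t := by
  choose x hTx hx using fun n ↦ hT (LocallyConstant.charFn ℝ (hB n))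
  have norm_x_le (n : ℕ) : ‖x n‖ ≤ C :=
    (hx n).trans (mul_le_of_le_one_right hC (norm_charFn_le_one (hB n)))
  set ε : ℝ := 1 / (2 * (‖T‖ + 1))
  have hε : 0 < ε := by positivity
  have hε₁ : ε ≤ 1 := (div_le_one (by positivity)).2 (by linarith [norm_nonneg T])
  have hTε : ‖T‖ * ε ≤ 1 / 2 := by
    rw [mul_one_div, div_le_div_iff₀ (by positivity) two_pos]
    linarith
  obtain ⟨n, m, hnm, M, z, hlM, hMz, hlz, hz⟩ := hP.exists_ne_norm_sub_block_lt norm_x_le l hε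
  refine ⟨n, M, z, hlM, hMz, hlz, ?_, fun t ht ↦ ?_⟩
  · calc ‖z‖ = ‖x n - x m - (x n - x m - z)‖ := by rw [_root_.sub_sub_cancel]
      _ ≤ ‖x n‖ + ‖x m‖ + ‖x n - x m - z‖ :=
        (norm_sub_le _ _).trans (add_le_add_left (norm_sub_le _ _) _)
      _ ≤ 2 * C + 1 := by linarith [norm_x_le n, norm_x_le m]
  · have apply_n : T (x n) t = 1 := by
      rw [hTx]; exact (LocallyConstant.charFn_eq_one ℝ t (hB n)).2 ht
    have apply_m : T (x m) t = 0 := by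
      rw [hTx]
      exact (LocallyConstant.charFn_eq_zero ℝ t (hB m)).2 (disjoint_left.1 (disjoint hnm) ht)
    have apply_error : T (x n - x m - z) t ≤ 1 / 2 :=
      calc T (x n - x m - z) t ≤ ‖T (x n - x m - z)‖ :=
            (le_abs_self _).trans ((T (x n - x m - z)).norm_coe_le_norm t)
        _ ≤ ‖T‖ * ε := T.le_opNorm_of_le hz.le
        _ ≤ 1 / 2 := hTε
    simp only [map_sub, ContinuousMap.sub_apply, apply_n, apply_m] at apply_error
    linarith

theorem IsFDD.exists_isBlockSequence_half_le_apply (hP : IsFDD P) (hC : 0 ≤ C)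
    (hT : ∀ h, ∃ x, T x = h ∧ ‖x‖ ≤ C * ‖h‖) {r : ℕ} {A : Set K} (hA : HasClopenTree r A)
    (l : ℕ) :
    ∃ t ∈ A, ∃ L z, IsBlockSequence P L z ∧ L 0 = l ∧ (∀ j, ‖z j‖ ≤ 2 * C + 1) ∧
      ∀ j < r, 1 / 2 ≤ T (z j) t := by
  induction hA generalizing l with
  | leaf hA =>
    obtain ⟨t, ht⟩ := hA
    refine ⟨t, ht, fun _ ↦ l, 0, ⟨monotone_const, ?_, ?_⟩, rfl, fun j ↦ ?_, by simp⟩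
    · simp
    · simp
    · simpa using by positivity
  | node B isClopen disjoint subset _ ih =>
    obtain ⟨n, M, z₀, hlM, hMz₀, hlz₀, norm_z₀_le, half_le⟩ :=
      hP.exists_block_half_le_apply hC hT isClopen disjoint l
    obtain ⟨t, ht, L, z, hz, rfl, norm_z_le, half_le_z⟩ := ih n M
    refine ⟨t, subset n ht, _, _, hz.cons hlM hMz₀ hlz₀, rfl, ?_, ?_⟩
    · rintro (_ | j)
      exacts [norm_z₀_le, norm_z_le j]
    · rintro (_ | j) hj
      exacts [half_le t ht, half_le_z j (Nat.lt_of_succ_lt_succ hj)]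

theorem IsFDD.not_exists_surjective_of_isLittleO [CompleteSpace X] (hP : IsFDD P) {l₀ : ℕ}
    {g : ℕ → ℝ} (hg : g =o[atTop] fun n ↦ (n : ℝ))
    (norm_sum_le : ∀ D L z, IsBlockSequence P L z → l₀ ≤ L 0 → (∀ j, ‖z j‖ ≤ D) →
      ∀ N, ‖∑ j ∈ Finset.range N, z j‖ ≤ D * g N)
    (hK : ∀ r, ∃ A : Set K, HasClopenTree r A) :
    ¬ ∃ T : X →L[ℝ] C(K, ℝ), Function.Surjective T := by
  rintro ⟨T, hT⟩
  obtain ⟨C, hC, lift⟩ := T.exists_preimage_norm_le hT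
  have natCast_le (N : ℕ) : (N : ℝ) ≤ 2 * (‖T‖ * (2 * C + 1)) * g N := by
    obtain ⟨A, hA⟩ := hK N
    obtain ⟨t, -, L, z, hz, rfl, norm_z_le, half_le⟩ :=
      hP.exists_isBlockSequence_half_le_apply hC.le lift hA l₀
    have half_natCast_le : (N : ℝ) * (1 / 2) ≤ ‖T‖ * ((2 * C + 1) * g N) :=
      calc (N : ℝ) * (1 / 2) ≤ ∑ j ∈ Finset.range N, T (z j) t := by
            simpa using Finset.card_nsmul_le_sum (Finset.range N) (fun j ↦ T (z j) t) (1 / 2)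
              fun j hj ↦ half_le j (Finset.mem_range.1 hj)
        _ = T (∑ j ∈ Finset.range N, z j) t := by rw [map_sum, ContinuousMap.sum_apply]
        _ ≤ ‖T (∑ j ∈ Finset.range N, z j)‖ :=
          (le_abs_self _).trans ((T _).norm_coe_le_norm t)
        _ ≤ ‖T‖ * ((2 * C + 1) * g N) :=
          T.le_opNorm_of_le (norm_sum_le _ L z hz le_rfl norm_z_le N)
    linarith
  have natCast_isBigO : (fun n : ℕ ↦ (n : ℝ)) =O[atTop] g :=
    .of_bound (2 * (‖T‖ * (2 * C + 1))) <| .of_forall fun N ↦ by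
      rw [Real.norm_natCast]
      exact (natCast_le N).trans (by gcongr; exact Real.le_norm_self _)
  refine Asymptotics.isLittleO_irrefl ?_ (natCast_isBigO.trans_isLittleO hg)
  exact ((eventually_gt_atTop 0).mono fun n hn ↦ Nat.cast_ne_zero.2 hn.ne').frequently

end Lifting

end Decomposition

/-! ### Coordinates in the Bourgain–Delbaen construction -/

theorem sum_smul_ek_apply (s : Finset ℕ) (c : ℕ → ℝ) (j : ℕ) :
    (∑ k ∈ s, c k • ek k : linf) j = if j ∈ s then c j else 0 := by
  rw [lp.coeFn_sum, Finset.sum_apply]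
  simp [ek, lp.single_apply, Pi.single_apply]

theorem mem_Esub_iff {d : ℕ → ℕ} {n : ℕ} {x : linf} :
    x ∈ Esub d n ↔ ∀ k ∉ Icc 1 (d n), x k = 0 := by
  constructor
  · intro hx k hk
    induction hx using Submodule.span_induction with
    | mem x hx =>
      obtain ⟨j, hj₁, hj, rfl⟩ := hx
      have : k ≠ j := fun h ↦ hk (h ▸ ⟨hj₁, hj⟩)
      simp [ek, lp.single_apply, this]
    | zero => rfl
    | add x y _ _ hx hy => rw [lp.coeFn_add, Pi.add_apply, hx, hy, _root_.add_zero]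
    | smul c x _ hx => rw [lp.coeFn_smul, Pi.smul_apply, hx, smul_zero]
  · intro hx
    have x_eq : x = ∑ k ∈ Finset.Icc 1 (d n), x k • ek k := by
      ext j
      rw [sum_smul_ek_apply]
      split_ifs with hj
      · rfl
      · exact hx j (by simpa using hj)
    rw [x_eq]
    refine Submodule.sum_mem _ fun k hk ↦ Submodule.smul_mem _ _ (Submodule.subset_span ?_)
    rw [Finset.mem_Icc] at hk
    exact ⟨k, hk.1, hk.2, rfl⟩

theorem finiteDimensional_Esub (d : ℕ → ℕ) (n : ℕ) : FiniteDimensional ℝ (Esub d n) :=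
  FiniteDimensional.span_of_finite ℝ <| ((finite_Icc 1 (d n)).image ek).subset <| by
    rintro _ ⟨k, hk₁, hk, rfl⟩
    exact ⟨k, ⟨hk₁, hk⟩, rfl⟩

namespace BDSetup

variable (S : BDSetup) {l m n k : ℕ} {x : linf}

theorem d_lt_d_succ_of_one_le_d (hn : 1 ≤ n) (hd : 1 ≤ S.d n) : S.d n < S.d (n + 1) := by
  obtain rfl | hn₂ := hn.eq_or_lt
  · rw [S.hd1, S.hd2]; exact one_lt_two
  · obtain ⟨k, hk, -⟩ := (S.hφ n hn₂).surjOn (a := (1, 1, 1, 1, 1))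
      ⟨.inl rfl, .inl rfl, le_rfl, hn₂, le_rfl, S.hd1.ge, le_rfl, hd⟩
    exact hk.1.trans_le hk.2

theorem le_d (hn : 1 ≤ n) : n ≤ S.d n := by
  induction n, hn using Nat.le_induction with
  | base => exact S.hd1.ge
  | succ n hn ih => exact ih.trans_lt (S.d_lt_d_succ_of_one_le_d hn (hn.trans ih))

theorem d_lt_d_succ (hn : 1 ≤ n) : S.d n < S.d (n + 1) :=
  S.d_lt_d_succ_of_one_le_d hn (hn.trans (S.le_d hn))

theorem d_le_d (hm : 1 ≤ m) (hmn : m ≤ n) : S.d m ≤ S.d n := by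
  induction n, hmn using Nat.le_induction with
  | base => exact le_rfl
  | succ n hmn ih => exact ih.trans (S.d_lt_d_succ (hm.trans hmn)).le

theorem exists_d_lt_le_d_succ (hk : S.d 2 < k) : ∃ n, 2 ≤ n ∧ S.d n < k ∧ k ≤ S.d (n + 1) := by
  by_contra! d_lt_of_d_lt
  have d_lt (n : ℕ) (hn : 2 ≤ n) : S.d n < k := by
    induction n, hn using Nat.le_induction with
    | base => exact hk
    | succ n hn ih => exact d_lt_of_d_lt n hn ih
  have := S.le_d (n := k + 2) (by lia)
  have := d_lt (k + 2) (by lia)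
  lia

theorem pi_apply_of_mem_Icc (x : linf) (hk : k ∈ Icc 1 (S.d m)) : S.pi m x k = x k :=
  (S.hpi m x k).trans (if_pos hk)

theorem pi_apply_of_notMem_Icc (x : linf) (hk : k ∉ Icc 1 (S.d m)) : S.pi m x k = 0 :=
  (S.hpi m x k).trans (if_neg hk)

theorem pi_mem_Esub (n : ℕ) (x : linf) : S.pi n x ∈ Esub S.d n :=
  mem_Esub_iff.2 fun _ ↦ S.pi_apply_of_notMem_Icc x

theorem pi_eq_pi {y : linf} (h : ∀ k ∈ Icc 1 (S.d m), x k = y k) : S.pi m x = S.pi m y := by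
  ext k
  by_cases hk : k ∈ Icc 1 (S.d m)
  · rw [S.pi_apply_of_mem_Icc x hk, S.pi_apply_of_mem_Icc y hk, h k hk]
  · rw [S.pi_apply_of_notMem_Icc x hk, S.pi_apply_of_notMem_Icc y hk]

theorem iMap_succ_apply (hn : 2 ≤ n) (hx : x ∈ Esub S.d n) (hk : k ∈ Ioc (S.d n) (S.d (n + 1))) :
    S.iMap n (n + 1) x k = S.a * (S.φ k).1 * x (S.φ k).2.1 + S.b * (S.φ k).2.2.2.1 *
      (x - S.iMap (S.φ k).2.2.1 n (S.pi (S.φ k).2.2.1 x)) (S.φ k).2.2.2.2 := by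
  rw [S.histep n hn x hx, lp.coeFn_add, Pi.add_apply, sum_smul_ek_apply,
    if_pos (Finset.mem_Ioc.2 hk), mem_Esub_iff.1 hx k fun h ↦ hk.1.not_ge h.2, _root_.zero_add]

theorem iMap_succ_apply_of_notMem (hn : 1 ≤ n) (hx : x ∈ Esub S.d n)
    (hk : k ∉ Ioc (S.d n) (S.d (n + 1))) : S.iMap n (n + 1) x k = x k := by
  obtain rfl | hn₂ := hn.eq_or_lt
  · rw [S.hi12 x hx]
  · rw [S.histep n hn₂ x hx, lp.coeFn_add, Pi.add_apply, sum_smul_ek_apply,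
      if_neg (by simpa using hk), _root_.add_zero]

theorem iMap_succ_mem_Esub (hn : 1 ≤ n) (hx : x ∈ Esub S.d n) :
    S.iMap n (n + 1) x ∈ Esub S.d (n + 1) := by
  have d_lt := S.d_lt_d_succ hn
  refine mem_Esub_iff.2 fun k hk ↦ ?_
  rw [mem_Icc] at hk
  rw [S.iMap_succ_apply_of_notMem hn hx (by rw [mem_Ioc]; lia)]
  exact mem_Esub_iff.1 hx k (by rw [mem_Icc]; lia)

theorem iMap_mem_Esub (hm : 1 ≤ m) (hmn : m < n) (hx : x ∈ Esub S.d m) :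
    S.iMap m n x ∈ Esub S.d n := by
  induction n, hmn using Nat.le_induction with
  | base => exact S.iMap_succ_mem_Esub hm hx
  | succ n hmn ih =>
    rw [S.hicomp m n hm hmn x hx]
    exact S.iMap_succ_mem_Esub (by lia) ih

theorem iMap_apply_of_le (hm : 1 ≤ m) (hmn : m < n) {N : ℕ} (hnN : n ≤ N) (hx : x ∈ Esub S.d m)
    (hk : k ≤ S.d n) : S.iMap m N x k = S.iMap m n x k := by
  induction N, hnN using Nat.le_induction with
  | base => rfl
  | succ N hnN ih =>
    have hkN : k ≤ S.d N := hk.trans (S.d_le_d (by lia) hnN)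
    rw [S.hicomp m N hm (by lia) x hx, S.iMap_succ_apply_of_notMem (by lia)
      (S.iMap_mem_Esub hm (by lia) hx) fun h ↦ h.1.not_ge hkN, ih]

theorem iMap_iMap (hl : 1 ≤ l) (hlm : l < m) (hmn : m < n) (hx : x ∈ Esub S.d l) :
    S.iMap m n (S.iMap l m x) = S.iMap l n x := by
  induction n, hmn using Nat.le_induction with
  | base => exact (S.hicomp l m hl hlm x hx).symm
  | succ n hmn ih =>
    rw [S.hicomp m n (by lia) hmn _ (S.iMap_mem_Esub hl hlm hx), ih,
      S.hicomp l n hl (by lia) x hx]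

/-! ### The projections `P m` -/

theorem P_apply_eq_iMap (hm : 1 ≤ m) (hmn : m < n) (x : linf) (hk : k ≤ S.d n) :
    S.P m x k = S.iMap m n (S.pi m x) k := by
  refine tendsto_nhds_unique (S.hPlim m hm x k) (tendsto_const_nhds.congr' ?_)
  filter_upwards [eventually_ge_atTop n] with N hnN
  exact (S.iMap_apply_of_le hm hmn hnN (S.pi_mem_Esub m x) hk).symm

theorem P_apply_of_mem_Icc (x : linf) (hm : 1 ≤ m) (hk : k ∈ Icc 1 (S.d m)) :
    S.P m x k = x k := by
  have hk_succ : k ≤ S.d (m + 1) := hk.2.trans (S.d_lt_d_succ hm).le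
  rw [S.P_apply_eq_iMap hm m.lt_succ_self x hk_succ, S.iMap_succ_apply_of_notMem hm
    (S.pi_mem_Esub m x) fun h ↦ h.1.not_ge hk.2, S.pi_apply_of_mem_Icc x hk]

theorem P_apply_zero (m : ℕ) (x : linf) : S.P m x 0 = 0 := by
  obtain rfl | hm := m.eq_zero_or_pos
  · rw [S.hP0]; rfl
  · rw [S.P_apply_eq_iMap hm m.lt_succ_self x (Nat.zero_le _)]
    exact mem_Esub_iff.1 (S.iMap_succ_mem_Esub hm (S.pi_mem_Esub m x)) 0 (by simp)

theorem apply_eq_zero_of_P_eq_zero (hm : 1 ≤ m) (hx : S.P m x = 0) (hk : k ∈ Icc 1 (S.d m)) :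
    x k = 0 := by
  rw [← S.P_apply_of_mem_Icc x hm hk, hx]; rfl

theorem P_eq_P {y : linf} (hm : 1 ≤ m) (h : ∀ k ∈ Icc 1 (S.d m), x k = y k) :
    S.P m x = S.P m y := by
  ext k
  refine tendsto_nhds_unique (S.hPlim m hm x k) ?_
  rw [S.pi_eq_pi h]
  exact S.hPlim m hm y k

theorem P_pi (hm : 1 ≤ m) (x : linf) : S.P m (S.pi m x) = S.P m x :=
  S.P_eq_P hm fun _ ↦ S.pi_apply_of_mem_Icc x

theorem P_P_of_le (hl : 1 ≤ l) (hlm : l ≤ m) (x : linf) : S.P l (S.P m x) = S.P l x :=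
  S.P_eq_P hl fun _ hk ↦
    S.P_apply_of_mem_Icc x (hl.trans hlm) ⟨hk.1, hk.2.trans (S.d_le_d hl hlm)⟩

theorem P_P_of_lt (hm : 1 ≤ m) (hml : m < l) (x : linf) : S.P l (S.P m x) = S.P m x := by
  have hl : 1 ≤ l := by lia
  have pi_P : S.pi l (S.P m x) = S.iMap m l (S.pi m x) := by
    ext k
    by_cases hk : k ∈ Icc 1 (S.d l)
    · rw [S.pi_apply_of_mem_Icc _ hk, S.P_apply_eq_iMap hm hml x hk.2]
    · rw [S.pi_apply_of_notMem_Icc _ hk]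
      exact (mem_Esub_iff.1 (S.iMap_mem_Esub hm hml (S.pi_mem_Esub m x)) k hk).symm
  ext k
  have hk : k ≤ S.d (l + k + 1) := le_trans (by lia) (S.le_d (by lia))
  rw [S.P_apply_eq_iMap hl (by lia) _ hk, pi_P,
    S.iMap_iMap hm hml (by lia) (S.pi_mem_Esub m x), S.P_apply_eq_iMap hm (by lia) x hk]

theorem isProjectionChain_P : IsProjectionChain S.P := by
  intro l m x
  obtain rfl | hl := l.eq_zero_or_pos
  · simp [S.hP0]
  obtain rfl | hm := m.eq_zero_or_pos
  · simp [S.hP0]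
  obtain hlm | hml := le_or_gt l m
  · rw [min_eq_left hlm, S.P_P_of_le hl hlm]
  · rw [min_eq_right hml.le, S.P_P_of_lt hm hml]

theorem apply_eq_of_P_eq_self (hn : 2 ≤ n) (hk : k ∈ Ioc (S.d n) (S.d (n + 1)))
    (hx : S.P n x = x) :
    x k = S.a * (S.φ k).1 * x (S.φ k).2.1 + S.b * (S.φ k).2.2.2.1 *
      (x (S.φ k).2.2.2.2 - S.P (S.φ k).2.2.1 x (S.φ k).2.2.2.2) := by
  obtain ⟨-, -, hm, hmn, hi₁, hi, hj₁, hj⟩ := (S.hφ n hn).mapsTo hk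
  have d_le := S.d_le_d hm hmn.le
  have pi_pi : S.pi (S.φ k).2.2.1 (S.pi n x) = S.pi (S.φ k).2.2.1 x :=
    S.pi_eq_pi fun _ hl ↦ S.pi_apply_of_mem_Icc x ⟨hl.1, hl.2.trans d_le⟩
  calc x k = S.iMap n (n + 1) (S.pi n x) k := by
        rw [← S.P_apply_eq_iMap (by lia) n.lt_succ_self x hk.2, hx]
    _ = _ := by
        rw [S.iMap_succ_apply hn (S.pi_mem_Esub n x) hk, pi_pi, lp.coeFn_sub, Pi.sub_apply,
          ← S.P_apply_eq_iMap hm hmn x hj, S.pi_apply_of_mem_Icc x ⟨hi₁, hi.trans d_le⟩,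
          S.pi_apply_of_mem_Icc x ⟨hj₁, hj⟩]

theorem a_pos : 0 < S.a := S.hb.trans S.hba

theorem exists_abs_apply_eq (hn : 2 ≤ n) (hk : k ∈ Ioc (S.d n) (S.d (n + 1))) :
    ∃ m, ∃ i < k, ∃ j < k, (∀ x, S.P m x = x → |x k| = S.a * |x i|) ∧
      ∀ x, S.P n x = x → S.P m x = 0 → |x k| = S.b * |x j| := by
  obtain ⟨hσ, hτ, hm, hmn, hi₁, hi, -, hj⟩ := (S.hφ n hn).mapsTo hk
  have abs_sign {σ : ℤ} (h : σ = 1 ∨ σ = -1) : |(σ : ℝ)| = 1 := by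
    obtain rfl | rfl := h <;> simp
  refine ⟨(S.φ k).2.2.1, _, (hi.trans (S.d_le_d hm hmn.le)).trans_lt hk.1, _, hj.trans_lt hk.1,
    fun x hx ↦ ?_, fun x hx hmx ↦ ?_⟩
  · have hnx := S.isProjectionChain_P.apply_eq_self_of_le hmn.le hx
    rw [S.apply_eq_of_P_eq_self hn hk hnx, hx, _root_.sub_self, mul_zero, _root_.add_zero,
      abs_mul, abs_mul, abs_sign hσ, abs_of_pos S.a_pos, mul_one]
  · have hi_zero : x (S.φ k).2.1 = 0 :=
      S.apply_eq_zero_of_P_eq_zero hm hmx ⟨hi₁, hi⟩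
    rw [S.apply_eq_of_P_eq_self hn hk hx, hmx, hi_zero, lp.coeFn_zero, Pi.zero_apply,
      _root_.sub_zero, mul_zero, _root_.zero_add, abs_mul, abs_mul, abs_sign hτ,
      abs_of_pos S.hb, mul_one]

/-! ### Sums of blocks -/

theorem abs_sum_Ico_apply_le_add {z : ℕ → linf} {D : ℝ} (hD : ∀ j, ‖z j‖ ≤ D) {p q t : ℕ}
    (ht : t ∈ Icc p q) (k : ℕ) :
    |(∑ j ∈ Finset.Ico p q, z j : linf) k| ≤ |(∑ j ∈ Finset.Ico p t, z j : linf) k| +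
      |(∑ j ∈ Finset.Ico (t + 1) q, z j : linf) k| + D := by
  have abs_sub_le := (lp.norm_apply_le_norm ENNReal.top_ne_zero _ k).trans
    (norm_sum_Ico_sub_add_le hD ht)
  rw [lp.coeFn_sub, lp.coeFn_add, Pi.sub_apply, Pi.add_apply, Real.norm_eq_abs] at abs_sub_le
  linarith [abs_sub_abs_le_abs_sub ((∑ j ∈ Finset.Ico p q, z j : linf) k)
    ((∑ j ∈ Finset.Ico p t, z j : linf) k + (∑ j ∈ Finset.Ico (t + 1) q, z j : linf) k),
    abs_add_le ((∑ j ∈ Finset.Ico p t, z j : linf) k)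
      ((∑ j ∈ Finset.Ico (t + 1) q, z j : linf) k)]

section Blocks

variable {L : ℕ → ℕ} {z : ℕ → linf} (hz : IsBlockSequence S.P L z) {D : ℝ} (hD : ∀ j, ‖z j‖ ≤ D)
include hz

theorem sum_apply_eq_zero_of_le_d (hm : 1 ≤ m) (hL : m ≤ L 0) (hk : k ≤ S.d m) (s : Finset ℕ) :
    (∑ j ∈ s, z j : linf) k = 0 := by
  rw [lp.coeFn_sum, Finset.sum_apply]
  refine Finset.sum_eq_zero fun j _ ↦ ?_
  obtain rfl | hk₀ := k.eq_zero_or_pos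
  · rw [← hz.apply_succ, S.P_apply_zero]
  · have hmL : m ≤ L j := hL.trans (hz.monotone j.zero_le)
    exact S.apply_eq_zero_of_P_eq_zero hm
      (S.isProjectionChain_P.apply_eq_zero_of_le hmL (hz.apply_self j)) ⟨hk₀, hk⟩

include hD

/-- Cut the sum at the level `n` of the coordinate `k`, then cut the lower part at the level `m`
provided by the enumeration. Each of the two cuts costs one block. -/
theorem exists_abs_sum_Ico_apply_le (hn : 2 ≤ n) (hk : k ∈ Ioc (S.d n) (S.d (n + 1))) {p q : ℕ}
    (hpq : p ≤ q) :
    ∃ i < k, ∃ j < k, ∃ t u, u ≤ q ∧ t ∈ Icc p u ∧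
      |(∑ l ∈ Finset.Ico p q, z l : linf) k| ≤ S.a * |(∑ l ∈ Finset.Ico p t, z l : linf) i| +
        S.b * |(∑ l ∈ Finset.Ico (t + 1) u, z l : linf) j| + 2 * D := by
  obtain ⟨m, i, hi, j, hj, apply_of_fixed, apply_of_killed⟩ := S.exists_abs_apply_eq hn hk
  obtain ⟨u, hu, below_n, above_n⟩ := hz.exists_split S.isProjectionChain_P n hpq
  obtain ⟨t, ht, below_m, above_m⟩ := hz.exists_split S.isProjectionChain_P m hu.1
  have low : |(∑ l ∈ Finset.Ico p t, z l : linf) k| =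
      S.a * |(∑ l ∈ Finset.Ico p t, z l : linf) i| :=
    apply_of_fixed _ ((map_sum _ _ _).trans (Finset.sum_congr rfl below_m))
  have middle : |(∑ l ∈ Finset.Ico (t + 1) u, z l : linf) k| =
      S.b * |(∑ l ∈ Finset.Ico (t + 1) u, z l : linf) j| := by
    refine apply_of_killed _ ((map_sum _ _ _).trans (Finset.sum_congr rfl fun l hl ↦ ?_))
      ((map_sum _ _ _).trans (Finset.sum_eq_zero fun l hl ↦ ?_))
    · exact below_n l (Finset.Ico_subset_Ico_left (ht.1.trans t.le_succ) hl)
    · exact S.isProjectionChain_P.apply_eq_zero_of_le m.le_succ (above_m l hl)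
  have high : (∑ l ∈ Finset.Ico (u + 1) q, z l : linf) k = 0 :=
    S.apply_eq_zero_of_P_eq_zero (by lia)
      ((map_sum _ _ _).trans (Finset.sum_eq_zero above_n)) ⟨by have := hk.1; lia, hk.2⟩
  refine ⟨i, hi, j, hj, t, u, hu.2, ht, ?_⟩
  have cut_n := abs_sum_Ico_apply_le_add hD hu k
  have cut_m := abs_sum_Ico_apply_le_add hD ht k
  rw [high, abs_zero] at cut_n
  rw [low, middle] at cut_m
  linarith

theorem abs_sum_Ico_apply_le (hL : 2 ≤ L 0) {g : ℕ → ℝ} (hg₀ : ∀ n, 0 ≤ g n)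
    (hg : ∀ u v w, u + v ≤ w → 1 ≤ w → S.a * g u + S.b * g v + 2 ≤ g w) (k p q : ℕ) :
    |(∑ j ∈ Finset.Ico p q, z j : linf) k| ≤ D * g (q - p) := by
  have D_nonneg : 0 ≤ D := (norm_nonneg _).trans (hD 0)
  have bound_nonneg : 0 ≤ D * g (q - p) := mul_nonneg D_nonneg (hg₀ _)
  induction k using Nat.strong_induction_on generalizing p q with
  | h k ih =>
    obtain hqp | hpq := le_or_gt q p
    · simpa [Finset.Ico_eq_empty_of_le hqp] using bound_nonneg
    obtain hk | hk := le_or_gt k (S.d 2)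
    · rwa [S.sum_apply_eq_zero_of_le_d hz one_le_two hL hk, abs_zero]
    obtain ⟨n, hn, hk⟩ := S.exists_d_lt_le_d_succ hk
    obtain ⟨i, hi, j, hj, t, u, huq, ht, recursion⟩ :=
      S.exists_abs_sum_Ico_apply_le hz hD hn hk hpq.le
    have growth := hg (t - p) (u - (t + 1)) (q - p) (by have := ht.1; have := ht.2; lia) (by lia)
    calc _ ≤ _ := recursion
      _ ≤ S.a * (D * g (t - p)) + S.b * (D * g (u - (t + 1))) + 2 * D := by
        gcongr
        · exact S.a_pos.le
        · exact ih i hi p t (mul_nonneg D_nonneg (hg₀ _))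
        · exact S.hb.le
        · exact ih j hj (t + 1) u (mul_nonneg D_nonneg (hg₀ _))
      _ = D * (S.a * g (t - p) + S.b * g (u - (t + 1)) + 2) := by ring
      _ ≤ D * g (q - p) := by gcongr

theorem norm_sum_range_le (hL : 2 ≤ L 0) {g : ℕ → ℝ} (hg₀ : ∀ n, 0 ≤ g n)
    (hg : ∀ u v w, u + v ≤ w → 1 ≤ w → S.a * g u + S.b * g v + 2 ≤ g w) (N : ℕ) :
    ‖∑ j ∈ Finset.range N, z j‖ ≤ D * g N := by
  have D_nonneg : 0 ≤ D := (norm_nonneg _).trans (hD 0)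
  refine lp.norm_le_of_forall_le (mul_nonneg D_nonneg (hg₀ N)) fun k ↦ ?_
  rw [Finset.range_eq_Ico]
  exact S.abs_sum_Ico_apply_le hz hD hL hg₀ hg k 0 N

end Blocks

/-! ### The decomposition of the Bourgain–Delbaen space -/

theorem P_mem_Xsub (m : ℕ) (x : linf) : S.P m x ∈ Xsub S := by
  obtain rfl | hm := m.eq_zero_or_pos
  · rw [S.hP0]; exact zero_mem _
  · rw [← S.P_pi hm]
    exact subset_closure (Submodule.subset_span
      (mem_iUnion₂.2 ⟨m, hm, mem_image_of_mem _ (S.pi_mem_Esub m x)⟩))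

theorem isCompactOperator_P (m : ℕ) : IsCompactOperator (S.P m) := by
  obtain rfl | hm := m.eq_zero_or_pos
  · rw [S.hP0]; exact isCompactOperator_zero
  have := finiteDimensional_Esub S.d m
  have := FiniteDimensional.proper ℝ (Esub S.d m)
  have isCompactOperator_pi :=
    isCompactOperator_of_locallyCompactSpace_dom ((S.pi m).codRestrict _ (S.pi_mem_Esub m))
  exact funext (S.P_pi hm) ▸ isCompactOperator_pi.clm_comp (S.P m ∘L (Esub S.d m).subtypeL)

theorem tendsto_P (hx : x ∈ Xsub S) : Tendsto (S.P · x) atTop (nhds x) := by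
  have equicontinuous : Equicontinuous fun m x ↦ S.P m x :=
    (LipschitzWith.uniformEquicontinuous _ S.lam.toNNReal fun m ↦ (S.P m).lipschitz.weaken
      (NNReal.coe_le_coe.1 ((S.hPnorm m).trans (Real.le_coe_toNNReal _)))).equicontinuous
  refine closure_minimal (fun y hy ↦ ?_)
    (equicontinuous.isClosed_setOfPred_tendsto (l := atTop) continuous_id) hx
  induction hy using Submodule.span_induction with
  | mem y hy =>
    obtain ⟨m, -, e, -, rfl⟩ := mem_iUnion₂.1 hy
    refine tendsto_const_nhds.congr' ?_
    filter_upwards [eventually_ge_atTop m] with n hmn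
    rw [S.isProjectionChain_P n m e, min_eq_right hmn, id]
  | zero => simp
  | add y y' _ _ hy hy' => simpa using hy.add hy'
  | smul c y _ hy => simpa using hy.const_smul c

/-- The restriction of `P m` to the Bourgain–Delbaen space. -/
noncomputable def proj (m : ℕ) : Xsub S →L[ℝ] Xsub S :=
  (S.P m).restrict fun x _ ↦ S.P_mem_Xsub m x

theorem isFDD_proj : IsFDD S.proj where
  isProjectionChain l m x := Subtype.ext (S.isProjectionChain_P l m x)
  isCompactOperator m :=
    ((S.isCompactOperator_P m).comp_clm (Xsub S).subtypeL).codRestrict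
      (SetLike.forall.2 fun x _ ↦ S.P_mem_Xsub m x) (Submodule.isClosed_topologicalClosure _)
  tendsto x := tendsto_subtype_rng.2 (S.tendsto_P x.2)

theorem isBlockSequence_coe {L : ℕ → ℕ} {z : ℕ → Xsub S} (hz : IsBlockSequence S.proj L z) :
    IsBlockSequence S.P L fun j ↦ (z j : linf) where
  monotone := hz.monotone
  apply_succ j := congrArg Subtype.val (hz.apply_succ j)
  apply_self j := congrArg Subtype.val (hz.apply_self j)

end BDSetup

theorem stmt_18_general (S : BDSetup) {K : Type*} [TopologicalSpace K] [CompactSpace K]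
    (hK : ∀ r, ∃ A : Set K, HasClopenTree r A) :
    ¬ ∃ T : Xsub S →L[ℝ] C(K, ℝ), Function.Surjective T := by
  have : CompleteSpace (Xsub S) :=
    (Submodule.isClosed_topologicalClosure _).completeSpace_coe
  obtain ⟨g, hg₀, hg, g_isLittleO⟩ :=
    exists_isLittleO_add_two_le S.a_pos.le S.ha S.hb.le (S.hba.trans S.ha)
  refine S.isFDD_proj.not_exists_surjective_of_isLittleO (l₀ := 2) g_isLittleO
    (fun D L z hz hL hD N ↦ ?_) hK
  simpa using S.norm_sum_range_le (S.isBlockSequence_coe hz) hD hL hg₀ hg N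

/-- `C([0, ω^ω])` is not isomorphic to a quotient of the Bourgain–Delbaen
space `X`; there is no bounded linear surjection from `X` onto `C([0, ω^ω])`. -/
theorem stmt_18 (S : BDSetup) :
    ¬ ∃ T : (Xsub S) →L[ℝ] C(Set.Iic ((ω : Ordinal) ^ (ω : Ordinal)), ℝ),
        Function.Surjective T :=
  stmt_18_general S exists_hasClopenTree_Iic_omega0_opow_omega0
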